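/- Let Σ_A(ℕ) be a topologically mixing, finitely primitive (BIP) countable Markov shift and f : Σ_A(ℕ) → ℝ satisfy the Walters condition with Var_1 f < ∞ and P(f) < ∞. Assume f has a unique maximizing measure μ, let V be a bounded calibrated sub-action, R_+ = −f − V + V∘σ + m(f), and R_+^∞(x) = Σ_{j=0}^∞ R_+(σ^j(x)) ∈ [0,∞]. If x ∈ Σ_A(ℕ) satisfies R_+^∞(x) < ∞, then every point p ∈ supp(μ) is an accumulation point of the sequence (σ^n(x))_{n≥0}. -/

import Mathlib

open Filter Topology MeasureTheory
open scoped ENNReal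

/-- The countable Markov shift over alphabet ℕ determined by the 0-1 matrix `A`. -/
def MarkovShift (A : ℕ → ℕ → Bool) : Type :=
  {x : ℕ → ℕ // ∀ i, A (x i) (x (i + 1)) = true}

namespace MarkovShift

variable {A : ℕ → ℕ → Bool}

instance : TopologicalSpace (MarkovShift A) :=
  instTopologicalSpaceSubtype

instance : MeasurableSpace (MarkovShift A) := borel _

instance : BorelSpace (MarkovShift A) := ⟨rfl⟩

/-- The shift map. -/
def shift (x : MarkovShift A) : MarkovShift A :=
  ⟨fun n => x.1 (n + 1), fun i => x.2 (i + 1)⟩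

/-- The cylinder set determined by a finite word. -/
def cylinder (w : List ℕ) : Set (MarkovShift A) :=
  {x | ∀ i : Fin w.length, x.1 i = w.get i}

/-- The cylinder set determined by the first `m` coordinates of `x`. -/
def cylOf (x : MarkovShift A) (m : ℕ) : Set (MarkovShift A) :=
  {y | ∀ i < m, y.1 i = x.1 i}

/-- A symbol is admissible when its cylinder is nonempty. -/
def Admissible (A : ℕ → ℕ → Bool) (a : ℕ) : Prop :=
  ∃ x : MarkovShift A, x.1 0 = a

/-- Topologically mixing. -/
def TopologicallyMixing (A : ℕ → ℕ → Bool) : Prop :=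
  ∀ a b : ℕ, Admissible A a → Admissible A b →
    ∃ N : ℕ, ∀ n ≥ N, ∃ x : MarkovShift A, x.1 0 = a ∧ (shift^[n] x).1 0 = b

/-- Finitely primitive (BIP). -/
def FinitelyPrimitive (A : ℕ → ℕ → Bool) : Prop :=
  ∃ (K₀ : ℕ) (F : Finset ℕ), ∀ a b : ℕ, Admissible A a → Admissible A b →
    ∃ w : List ℕ, w.length = K₀ ∧ (∀ c ∈ w, c ∈ F) ∧
      List.Chain' (fun u v => A u v = true) (a :: (w ++ [b]))

/-- First coordinate where two distinct points disagree. -/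
noncomputable def firstDiff (x y : MarkovShift A) (h : x ≠ y) : ℕ :=
  Nat.find (Function.ne_iff.mp (fun hxy : x.1 = y.1 => h (Subtype.ext hxy)))

open Classical in
/-- The metric `d(x,y) = r^{t(x,y)}`. -/
noncomputable def dist' (r : ℝ) (x y : MarkovShift A) : ℝ :=
  if h : x = y then 0 else r ^ firstDiff x y h

/-- Birkhoff sum `S_n f`. -/
def birkhoff (f : MarkovShift A → ℝ) (n : ℕ) (x : MarkovShift A) : ℝ :=
  ∑ j ∈ Finset.range n, f (shift^[j] x)

/-- The set of values `|S_n f x - S_n f y|` over pairs agreeing on the first `m` coordinates. -/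
def varSet (f : MarkovShift A → ℝ) (n m : ℕ) : Set ℝ :=
  {c | ∃ x y : MarkovShift A, (∀ i < m, x.1 i = y.1 i) ∧ c = |birkhoff f n x - birkhoff f n y|}

/-- `Var_m (S_n f)`. -/
noncomputable def varBirk (f : MarkovShift A → ℝ) (n m : ℕ) : ℝ := sSup (varSet f n m)

/-- `Var_1 f < ∞`. -/
def Var1Finite (f : MarkovShift A → ℝ) : Prop := BddAbove (varSet f 1 1)

/-- The set whose supremum is `sup_{n ≥ 1} Var_{n+k}(S_n f)`. -/
def waltersSet (f : MarkovShift A → ℝ) (k : ℕ) : Set ℝ :=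
  {c | ∃ n, 1 ≤ n ∧ c ∈ varSet f n (n + k)}

/-- `M_k = sup_{n ≥ 1} Var_{n+k}(S_n f)`. -/
noncomputable def waltersSup (f : MarkovShift A → ℝ) (k : ℕ) : ℝ := sSup (waltersSet f k)

/-- The Walters condition. -/
def SatisfiesWalters (f : MarkovShift A → ℝ) : Prop :=
  (∀ k, 1 ≤ k → BddAbove (waltersSet f k)) ∧
    Tendsto (fun k => waltersSup f k) atTop (𝓝 0)

/-- The partition function `Z_n(f,a) = Σ_{σ^n x = x, x₀ = a} e^{S_n f (x)}`. -/
noncomputable def partitionSum (f : MarkovShift A → ℝ) (n : ℕ) (a : ℕ) : ℝ :=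
  ∑' x : {x : MarkovShift A // shift^[n] x = x ∧ x.1 0 = a}, Real.exp (birkhoff f n x.1)

/-- `f` has (finite) Gurevich pressure `p`. -/
def HasGurevichPressure (f : MarkovShift A → ℝ) (p : ℝ) : Prop :=
  ∀ a : ℕ, Admissible A a →
    (∀ n, 1 ≤ n → Summable fun x : {x : MarkovShift A // shift^[n] x = x ∧ x.1 0 = a} =>
        Real.exp (birkhoff f n x.1)) ∧
    Tendsto (fun n : ℕ => (1 / (n : ℝ)) * Real.log (partitionSum f n a)) atTop (𝓝 p)

/-- σ-invariant Borel probability measure. -/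
def IsInvariantProb (μ : Measure (MarkovShift A)) : Prop :=
  IsProbabilityMeasure μ ∧ μ.map shift = μ

/-- `m(f)`, the maximal ergodic average. -/
noncomputable def mf (f : MarkovShift A → ℝ) : ℝ :=
  sSup {c | ∃ μ : Measure (MarkovShift A),
    IsInvariantProb μ ∧ Integrable f μ ∧ ∫ x, f x ∂μ = c}

/-- A maximizing measure for `f`. -/
def IsMaximizing (f : MarkovShift A → ℝ) (μ : Measure (MarkovShift A)) : Prop :=
  IsInvariantProb μ ∧ Integrable f μ ∧ ∫ x, f x ∂μ = mf f

/-- Bounded real valued function. -/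
def BoundedFun (g : MarkovShift A → ℝ) : Prop := ∃ C, ∀ x, |g x| ≤ C

/-- A bounded calibrated sub-action for `f`. -/
def IsCalibratedSubaction (f V : MarkovShift A → ℝ) : Prop :=
  Continuous V ∧ BoundedFun V ∧
    (∀ x, f x + V x - V (shift x) - mf f ≤ 0) ∧
    (∀ y, ∃ x, shift x = y ∧ f x + V x - V (shift x) - mf f = 0)

/-- The Ruelle transfer operator `(L_g u)(x) = Σ_{σ y = x} e^{g(y)} u(y)`. -/
noncomputable def ruelle (g u : MarkovShift A → ℝ) (x : MarkovShift A) : ℝ :=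
  ∑' y : {y : MarkovShift A // shift y = x}, Real.exp (g y.1) * u y.1

/-- Ruelle-Perron-Frobenius data for the potential `f` with pressure `p`:
eigenfunction `h`, eigenmeasure `ν`. -/
def IsRPF (f : MarkovShift A → ℝ) (p : ℝ) (h : MarkovShift A → ℝ)
    (ν : Measure (MarkovShift A)) : Prop :=
  Continuous h ∧ (∀ x, 0 < h x) ∧
    (∀ x, ruelle f h x = Real.exp p * h x) ∧
    IsProbabilityMeasure ν ∧
    (∀ g : MarkovShift A → ℝ, Continuous g → BoundedFun g →
      ∫ x, ruelle f g x ∂ν = Real.exp p * ∫ x, g x ∂ν) ∧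
    ∫ x, h x ∂ν = 1

/-- The Gibbs measure `dμ = h dν`. -/
noncomputable def gibbs (h : MarkovShift A → ℝ) (ν : Measure (MarkovShift A)) :
    Measure (MarkovShift A) :=
  ν.withDensity fun x => ENNReal.ofReal (h x)

/-- The Mañé potential `S_f(x,y)` (with respect to the metric of parameter `r`). -/
noncomputable def manePot (r : ℝ) (f : MarkovShift A → ℝ) (x y : MarkovShift A) : EReal :=
  ⨅ ε : {ε : ℝ // 0 < ε}, ⨆ n : {n : ℕ // 1 ≤ n},
    ⨆ _z : {z : MarkovShift A // dist' r x z < ε.1 ∧ shift^[n.1] z = y},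
      ((birkhoff (fun w => f w - mf f) n.1 _z.1 : ℝ) : EReal)

/-- The (topological) support of a measure. -/
def msupport (μ : Measure (MarkovShift A)) : Set (MarkovShift A) :=
  {x | ∀ U : Set (MarkovShift A), IsOpen U → x ∈ U → 0 < μ U}

end MarkovShift

namespace MarkovShift

/-!
Finiteness of `R₊^∞(x)` gives `R₊(σʲx) → 0`. Since `f = m(f) - R₊ - V + V ∘ σ` with `V` bounded,
`f` is bounded below along the orbit of `x`. Under BIP, bounded first variation and finite pressure,
`f` is coercive, that is, `f ≥ t` holds only on finitely many one-letter cylinders; hence the orbit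
of `x` uses finitely many symbols and stays in a compact set. A weak limit `ν` of the empirical
measures of the orbit is then an invariant probability measure whose support consists of cluster
points of the orbit. At such points `R₊` vanishes, so `f` is `ν`-a.e. cohomologous to the constant
`m(f)`, and `ν` is maximizing.
-/

section EmpiricalMeasure

variable {X : Type*} [MeasurableSpace X] {T : X → X} {x : X}

/-- The uniform probability measure on the orbit segment `x, T x, …, Tⁿ x`. The segment has `n + 1`
points, so that the definition makes sense for every `n`. -/
noncomputable def empiricalMeasure (T : X → X) (x : X) (n : ℕ) : ProbabilityMeasure X where
  val := ((n + 1 : ℕ) : ℝ≥0∞)⁻¹ • ∑ j ∈ Finset.range (n + 1), Measure.dirac (T^[j] x)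
  property := ⟨by
    simp only [Measure.smul_apply, Measure.finsetSum_apply, measure_univ, smul_eq_mul,
      Finset.sum_const, Finset.card_range, nsmul_eq_mul, mul_one]
    exact ENNReal.inv_mul_cancel (Nat.cast_ne_zero.2 n.succ_ne_zero) (ENNReal.natCast_ne_top _)⟩

lemma integral_empiricalMeasure {E : Type*} [NormedAddCommGroup E] [NormedSpace ℝ E]
    [CompleteSpace E] {φ : X → E} (hφ : StronglyMeasurable φ) (n : ℕ) :
    ∫ y, φ y ∂(empiricalMeasure T x n : Measure X) = birkhoffAverage ℝ T φ (n + 1) x := by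
  rw [empiricalMeasure, ProbabilityMeasure.coe_mk, integral_smul_measure, integral_finsetSum_measure
    fun j _ => integrable_dirac' hφ (by finiteness)]
  simp only [integral_dirac' _ _ hφ, ENNReal.toReal_inv, ENNReal.toReal_natCast, birkhoffAverage,
    birkhoffSum]

lemma tendsto_empiricalMeasure_zero {s : Set X} (hs : MeasurableSet s)
    (h : ∀ᶠ n in atTop, T^[n] x ∉ s) :
    Tendsto (fun n => (empiricalMeasure T x n : Measure X) s) atTop (𝓝 0) := by
  have hind : Tendsto (fun n => s.indicator (1 : X → ℝ) (T^[n] x)) atTop (𝓝 0) :=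
    tendsto_const_nhds.congr' <| h.mono fun n hn => (Set.indicator_of_notMem hn 1).symm
  have havg := hind.cesaro_smul.comp (tendsto_add_atTop_nat 1)
  rw [← ENNReal.tendsto_toReal_zero_iff]
  refine havg.congr fun n => ?_
  rw [← measureReal_def, ← integral_indicator_one hs,
    integral_empiricalMeasure (stronglyMeasurable_one.indicator hs)]
  rfl

variable [TopologicalSpace X] [BorelSpace X]

lemma exists_mapClusterPt_empiricalMeasure [T2Space X] {K : Set X} (hK : IsCompact K)
    (hx : ∀ n, T^[n] x ∈ K) :
    ∃ ν : ProbabilityMeasure X, MapClusterPt ν atTop (empiricalMeasure T x) := by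
  have hK0 (n : ℕ) : (empiricalMeasure T x n : Measure X) Kᶜ = 0 := by
    simp [empiricalMeasure, hx, hK.measurableSet.compl]
  have htight : IsTightMeasureSet
      {(μ : Measure X) | μ ∈ Set.range (empiricalMeasure T x)} := by
    rw [isTightMeasureSet_iff_exists_isCompact_measure_compl_le]
    rintro ε -
    refine ⟨K, hK, ?_⟩
    rintro _ ⟨_, ⟨n, rfl⟩, rfl⟩
    simp only [hK0, zero_le]
  obtain ⟨ν, -, hν⟩ := (isCompact_closure_of_isTightMeasureSet htight).exists_mapClusterPt
    (f := atTop) (u := empiricalMeasure T x)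
    (tendsto_principal.2 <| .of_forall fun n => subset_closure (Set.mem_range_self n))
  exact ⟨ν, hν⟩

variable [HasOuterApproxClosed X] {ν : ProbabilityMeasure X}

lemma measurePreserving_of_mapClusterPt_empiricalMeasure (hT : Continuous T)
    (hν : MapClusterPt ν atTop (empiricalMeasure T x)) :
    MeasurePreserving T (ν : Measure X) ν := by
  obtain ⟨𝒰, h𝒰, hlim⟩ := mapClusterPt_iff_ultrafilter.1 hν
  rw [ProbabilityMeasure.tendsto_iff_forall_integral_tendsto] at hlim
  refine ⟨hT.measurable, ?_⟩
  have := Measure.isProbabilityMeasure_map (μ := (ν : Measure X)) hT.aemeasurable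
  refine ext_of_forall_integral_eq_of_IsFiniteMeasure fun φ => ?_
  rw [integral_map hT.aemeasurable φ.continuous.aestronglyMeasurable]
  let φT := φ.compContinuous ⟨T, hT⟩
  have havg (n : ℕ) : ∫ y, φT y ∂(empiricalMeasure T x n : Measure X) -
        ∫ y, φ y ∂(empiricalMeasure T x n : Measure X) =
      birkhoffAverage ℝ T φ (n + 1) (T x) - birkhoffAverage ℝ T φ (n + 1) x := by
    rw [integral_empiricalMeasure φT.continuous.measurable.stronglyMeasurable,
      integral_empiricalMeasure φ.continuous.measurable.stronglyMeasurable]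
    simp only [birkhoffAverage, birkhoffSum, φT, BoundedContinuousFunction.compContinuous_apply,
      ContinuousMap.coe_mk, ← Function.iterate_succ_apply, Function.iterate_succ_apply']
  have hzero : Tendsto (fun n => ∫ y, φT y ∂(empiricalMeasure T x n : Measure X) -
      ∫ y, φ y ∂(empiricalMeasure T x n : Measure X)) atTop (𝓝 0) := by
    simp only [havg]
    exact (tendsto_birkhoffAverage_apply_sub_birkhoffAverage' ℝ φ.isBounded_range T x).comp
      (tendsto_add_atTop_nat 1)
  exact sub_eq_zero.1 <|
    tendsto_nhds_unique ((hlim φT).sub (hlim φ)) (hzero.mono_left h𝒰)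

lemma mapClusterPt_orbit_of_mem_support (hν : MapClusterPt ν atTop (empiricalMeasure T x)) {q : X}
    (hq : q ∈ (ν : Measure X).support) : MapClusterPt q atTop (fun n => T^[n] x) := by
  rw [(nhds_basis_opens q).mapClusterPt_iff_frequently]
  rintro U ⟨hqU, hU⟩
  by_contra hfreq
  obtain ⟨𝒰, h𝒰, hlim⟩ := mapClusterPt_iff_ultrafilter.1 hν
  have hempty : Tendsto (fun n => (empiricalMeasure T x n : Measure X) U) 𝒰 (𝓝 0) :=
    (tendsto_empiricalMeasure_zero hU.measurableSet (not_frequently.1 hfreq)).mono_left h𝒰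
  have hνU : (ν : Measure X) U ≤ 0 :=
    (ProbabilityMeasure.le_liminf_measure_open_of_tendsto hlim hU).trans_eq hempty.liminf_eq
  exact hνU.not_gt ((Measure.mem_support_iff_forall q).1 hq U (hU.mem_nhds hqU))

end EmpiricalMeasure

section Topology

variable {A : ℕ → ℕ → Bool}

lemma coord_iterate_shift (n : ℕ) (x : MarkovShift A) (i : ℕ) :
    (shift^[n] x).1 i = x.1 (i + n) := by
  induction n generalizing x with
  | zero => rfl
  | succ _ ih => exact ih (shift x)

lemma continuous_coord (i : ℕ) : Continuous fun x : MarkovShift A => x.1 i :=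
  (continuous_apply i).comp continuous_subtype_val

lemma continuous_shift : Continuous (shift : MarkovShift A → MarkovShift A) :=
  (continuous_pi fun n => continuous_coord (n + 1)).subtype_mk _

lemma isClosedEmbedding_val : IsClosedEmbedding (Subtype.val : MarkovShift A → ℕ → ℕ) := by
  have hclosed : IsClosed {x : ℕ → ℕ | ∀ i, A (x i) (x (i + 1)) = true} := by
    rw [Set.ofPred_forall]
    exact isClosed_iInter fun i => (isClosed_discrete {p : ℕ × ℕ | A p.1 p.2 = true}).preimage
      (f := fun x : ℕ → ℕ => (x i, x (i + 1))) (by fun_prop)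
  exact hclosed.isClosedEmbedding_subtypeVal

instance : TopologicalSpace.MetrizableSpace (MarkovShift A) :=
  isClosedEmbedding_val.isEmbedding.metrizableSpace

instance : SecondCountableTopology (MarkovShift A) :=
  isClosedEmbedding_val.isEmbedding.secondCountableTopology

lemma isCompact_forall_coord_mem {S : ℕ → Set ℕ} (hS : ∀ i, (S i).Finite) :
    IsCompact {x : MarkovShift A | ∀ i, x.1 i ∈ S i} := by
  have hpi : {x : MarkovShift A | ∀ i, x.1 i ∈ S i} = Subtype.val ⁻¹' Set.univ.pi S :=
    Set.ext fun _ => Set.mem_univ_pi.symm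
  rw [hpi]
  exact isClosedEmbedding_val.isCompact_preimage (isCompact_univ_pi fun i => (hS i).isCompact)

lemma SatisfiesWalters.continuous {f : MarkovShift A → ℝ} (hf : SatisfiesWalters f) :
    Continuous f := by
  refine continuous_iff_continuousAt.2 fun x => Metric.tendsto_nhds.2 fun ε hε => ?_
  obtain ⟨k, hkε, hk⟩ := ((hf.2.eventually (gt_mem_nhds hε)).and (eventually_ge_atTop 1)).exists
  have hcyl : ∀ᶠ y in 𝓝 x, ∀ i ∈ Finset.range (1 + k), y.1 i = x.1 i :=
    (Finset.eventually_all _).2 fun i _ =>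
      (continuous_coord i).continuousAt.eventually ((isOpen_discrete {x.1 i}).mem_nhds rfl)
  filter_upwards [hcyl] with y hy
  refine (le_csSup (hf.1 k hk) ?_).trans_lt hkε
  refine ⟨1, le_rfl, y, x, fun i hi => hy i (Finset.mem_range.2 hi), ?_⟩
  simp [birkhoff, Real.dist_eq]

lemma msupport_eq_support (μ : Measure (MarkovShift A)) : msupport μ = μ.support := by
  rw [Measure.support_eq_forall_isOpen]
  exact Set.ext fun x => forall_congr' fun U => imp.swap

end Topology

section Coercivity

variable {A : ℕ → ℕ → Bool} {f : MarkovShift A → ℝ}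

/-- `f` is coercive when `sup f|[a] → -∞` as the symbol `a → ∞`: every superlevel set of `f` meets
only finitely many one-letter cylinders. -/
def IsCoercive (f : MarkovShift A → ℝ) : Prop :=
  ∀ t : ℝ, {a | ∃ y : MarkovShift A, y.1 0 = a ∧ t ≤ f y}.Finite

lemma exists_periodic_of_isChain {a : ℕ} {l : List ℕ}
    (h : List.IsChain (fun u v => A u v = true) (a :: (l ++ [a]))) :
    ∃ x : MarkovShift A, shift^[l.length + 1] x = x ∧
      ∀ (i : ℕ) (hi : i < (a :: l).length), x.1 i = (a :: l)[i] := by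
  have hlt (i : ℕ) : i % (l.length + 1) < (a :: l).length := Nat.mod_lt _ l.length.succ_pos
  have hadm (i : ℕ) :
      A ((a :: l)[i % (l.length + 1)]'(hlt i)) ((a :: l)[(i + 1) % (l.length + 1)]'(hlt _)) := by
    have hi : i % (l.length + 1) < l.length + 1 := hlt i
    have hstep := List.isChain_iff_getElem.1 h (i % (l.length + 1)) (by simpa using hi)
    rcases (Nat.succ_le_of_lt hi).lt_or_eq with hinner | hlast
    · have hsucc : (i + 1) % (l.length + 1) = i % (l.length + 1) + 1 := by
        rw [← Nat.mod_add_mod, Nat.mod_eq_of_lt hinner]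
      simp only [hsucc]
      grind
    · have hsucc : (i + 1) % (l.length + 1) = 0 := by
        rw [← Nat.mod_add_mod, ← Nat.succ_eq_add_one, hlast, Nat.mod_self]
      simp only [hsucc]
      grind
  refine ⟨⟨fun i => (a :: l)[i % (l.length + 1)]'(hlt i), hadm⟩, ?_, fun i hi => ?_⟩
  · refine Subtype.ext (funext fun i => (coord_iterate_shift _ _ _).trans ?_)
    simp only [Nat.add_mod_right]
  · simp only [Nat.mod_eq_of_lt (show i < l.length + 1 from hi)]

lemma FinitelyPrimitive.exists_periodic (hA : FinitelyPrimitive A) {a : ℕ} (ha : Admissible A a) :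
    ∃ (N k : ℕ) (F : Finset ℕ), k < N ∧ ∀ b, Admissible A b →
      ∃ x : MarkovShift A, shift^[N] x = x ∧ x.1 0 = a ∧ x.1 k = b ∧
        ∀ i < N, i ≠ k → x.1 i ∈ F := by
  obtain ⟨K, F, hF⟩ := hA
  refine ⟨2 * K + 2, K + 1, insert a F, by omega, fun b hb => ?_⟩
  obtain ⟨w, hw, hwF, hab⟩ := hF a b ha hb
  obtain ⟨w', hw', hwF', hba⟩ := hF b a hb ha
  have hloop : List.IsChain (fun u v => A u v = true) (a :: ((w ++ b :: w') ++ [a])) := by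
    simpa using (List.isChain_split (l₁ := a :: w)).2 ⟨hab, hba⟩
  obtain ⟨x, hper, hx⟩ := exists_periodic_of_isChain hloop
  have hlen : (w ++ b :: w').length + 1 = 2 * K + 2 := by
    rw [List.length_append, List.length_cons]
    omega
  rw [hlen] at hper
  refine ⟨x, hper, hx 0 (by simp), ?_, fun i hi hik => ?_⟩
  · rw [hx (K + 1) (by rw [List.length_cons]; omega)]
    simp [hw]
  · rw [hx i (by rw [List.length_cons]; omega)]
    grind

lemma birkhoff_ge_of_forall_ne {n k : ℕ} (hk : k < n) {c : ℝ} {x : MarkovShift A}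
    (hc : ∀ i < n, i ≠ k → c ≤ f (shift^[i] x)) :
    f (shift^[k] x) + (n - 1 : ℕ) • c ≤ birkhoff f n x := by
  have hmem : k ∈ Finset.range n := Finset.mem_range.2 hk
  rw [birkhoff, ← Finset.add_sum_erase _ _ hmem, ← Finset.card_range n,
    ← Finset.card_erase_of_mem hmem, Finset.card_range]
  refine add_le_add_right (Finset.card_nsmul_le_sum _ _ _ fun i hi => ?_) _
  obtain ⟨hik, hin⟩ := Finset.mem_erase.1 hi
  exact hc i (Finset.mem_range.1 hin) hik

lemma Var1Finite.exists_forall_le_add (hf : Var1Finite f) :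
    ∃ D, ∀ x y : MarkovShift A, x.1 0 = y.1 0 → f x ≤ f y + D := by
  obtain ⟨D, hD⟩ := hf
  refine ⟨D, fun x y hxy => sub_le_iff_le_add'.1 ((le_abs_self _).trans (hD ⟨x, y, ?_, ?_⟩))⟩
  · simpa using hxy
  · simp [birkhoff]

lemma Var1Finite.exists_forall_le_of_mem (hf : Var1Finite f) (F : Finset ℕ) :
    ∃ c, ∀ y : MarkovShift A, y.1 0 ∈ F → c ≤ f y := by
  obtain ⟨D, hD⟩ := hf.exists_forall_le_add
  have hcyl (a : ℕ) : BddBelow (f '' {y | y.1 0 = a}) := by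
    rcases Set.eq_empty_or_nonempty {y : MarkovShift A | y.1 0 = a} with he | ⟨z, hz⟩
    · simp [he]
    · refine ⟨f z - D, Set.forall_mem_image.2 fun y hy => ?_⟩
      exact sub_le_iff_le_add.2 (hD z y (hz.trans hy.symm))
  obtain ⟨c, hc⟩ := F.finite_toSet.bddBelow_biUnion.2 fun a _ => hcyl a
  exact ⟨c, fun y hy => hc (Set.mem_biUnion hy ⟨y, rfl, rfl⟩)⟩

lemma finite_periodic_le_birkhoff {n a : ℕ}
    (hsum : Summable fun x : {x : MarkovShift A // shift^[n] x = x ∧ x.1 0 = a} =>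
      Real.exp (birkhoff f n x.1)) (c : ℝ) :
    {x : MarkovShift A | (shift^[n] x = x ∧ x.1 0 = a) ∧ c ≤ birkhoff f n x}.Finite := by
  have hfin := hsum.tendsto_cofinite_zero.eventually (gt_mem_nhds (Real.exp_pos c))
  rw [eventually_cofinite] at hfin
  refine (hfin.image Subtype.val).subset fun x ⟨hx, hcx⟩ => ⟨⟨x, hx⟩, ?_, rfl⟩
  exact (Real.exp_le_exp.2 hcx).not_gt

lemma FinitelyPrimitive.isCoercive (hA : FinitelyPrimitive A) (hf : Var1Finite f)
    (hsum : ∀ a, Admissible A a → ∀ n, 1 ≤ n →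
      Summable fun x : {x : MarkovShift A // shift^[n] x = x ∧ x.1 0 = a} =>
        Real.exp (birkhoff f n x.1)) :
    IsCoercive f := by
  intro t
  -- Each symbol `b` with `f ≥ t` somewhere on its cylinder lies on a periodic orbit of fixed period
  -- with Birkhoff sum bounded below; a convergent partition sum has only finitely many such terms.
  rcases isEmpty_or_nonempty (MarkovShift A) with hemp | ⟨⟨z⟩⟩
  · simp
  have ha : Admissible A (z.1 0) := ⟨z, rfl⟩
  obtain ⟨N, k, F, hkN, hper⟩ := hA.exists_periodic ha
  obtain ⟨D, hD⟩ := hf.exists_forall_le_add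
  obtain ⟨c, hc⟩ := hf.exists_forall_le_of_mem F
  have hfin := finite_periodic_le_birkhoff (hsum _ ha N (by omega)) (t - D + (N - 1 : ℕ) • c)
  refine (hfin.image fun x => x.1 k).subset ?_
  rintro _ ⟨y, rfl, hty⟩
  obtain ⟨x, hx, hx0, hxk, hxF⟩ := hper (y.1 0) ⟨y, rfl⟩
  have hcoord (i : ℕ) : (shift^[i] x).1 0 = x.1 i := by rw [coord_iterate_shift, zero_add]
  have hyx : t - D ≤ f (shift^[k] x) := by
    linarith [hD y (shift^[k] x) ((hcoord k).trans hxk).symm]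
  refine ⟨x, ⟨⟨hx, hx0⟩, (add_le_add_left hyx _).trans ?_⟩, hxk⟩
  exact birkhoff_ge_of_forall_ne hkN fun i hi hik => hc _ (by rw [hcoord]; exact hxF i hi hik)

end Coercivity

section Subaction

variable {A : ℕ → ℕ → Bool} {f V : MarkovShift A → ℝ}

/-- The function `R₊ = -f - V + V ∘ σ + m(f)`, nonnegative exactly when `V` is a sub-action. -/
noncomputable def residual (f V : MarkovShift A → ℝ) (x : MarkovShift A) : ℝ :=
  -(f x + V x - V (shift x) - mf f)

lemma continuous_residual (hf : Continuous f) (hV : Continuous V) :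
    Continuous (residual f V) :=
  (((hf.add hV).sub (hV.comp continuous_shift)).sub continuous_const).neg

lemma tendsto_residual_zero (hR : ∀ y, 0 ≤ residual f V y) {x : MarkovShift A}
    (hx : ∑' j, ENNReal.ofReal (residual f V (shift^[j] x)) ≠ ⊤) :
    Tendsto (fun j => residual f V (shift^[j] x)) atTop (𝓝 0) := by
  have h := (ENNReal.tendsto_toReal_zero_iff fun _ => ENNReal.ofReal_ne_top).2
    (ENNReal.tendsto_atTop_zero_of_tsum_ne_top hx)
  simpa only [ENNReal.toReal_ofReal (hR _)] using h

lemma BoundedFun.exists_forall_le_of_residual_le (hV : BoundedFun V) (C : ℝ) :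
    ∃ t, ∀ y, residual f V y ≤ C → t ≤ f y := by
  obtain ⟨B, hB⟩ := hV
  refine ⟨mf f - C - 2 * B, fun y hy => ?_⟩
  rw [residual] at hy
  linarith [(abs_le.1 (hB y)).2, (abs_le.1 (hB (shift y))).1]

lemma IsCoercive.exists_isCompact_orbit_subset (hf : IsCoercive f) (hV : BoundedFun V)
    {x : MarkovShift A} (hx : BddAbove (Set.range fun j => residual f V (shift^[j] x))) :
    ∃ K : Set (MarkovShift A), IsCompact K ∧ ∀ n, shift^[n] x ∈ K := by
  obtain ⟨C, hC⟩ := hx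
  obtain ⟨t, ht⟩ := hV.exists_forall_le_of_residual_le (f := f) C
  refine ⟨_, isCompact_forall_coord_mem fun _ => hf t, fun n i => ?_⟩
  refine ⟨shift^[i + n] x, ?_, ht _ (hC ⟨i + n, rfl⟩)⟩
  rw [coord_iterate_shift, coord_iterate_shift, zero_add]

lemma isMaximizing_of_residual_ae_eq_zero (hVm : Measurable V) (hV : BoundedFun V)
    {ν : Measure (MarkovShift A)} (hν : IsInvariantProb ν) (hR : residual f V =ᵐ[ν] 0) :
    IsMaximizing f ν := by
  have hprob : IsProbabilityMeasure ν := hν.1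
  have hσ : MeasurePreserving shift ν ν := ⟨continuous_shift.measurable, hν.2⟩
  have hVint : Integrable V ν := hV.elim fun B hB =>
    Integrable.of_bound hVm.aestronglyMeasurable B (ae_of_all _ hB)
  have hVσint : Integrable (fun y => V (shift y)) ν := hσ.integrable_comp_of_integrable hVint
  have hcob : f =ᵐ[ν] fun y => V (shift y) - V y + mf f := by
    filter_upwards [hR] with y hy
    simp only [residual, Pi.zero_apply] at hy
    linarith
  have hVσ : ∫ y, V (shift y) ∂ν = ∫ y, V y ∂ν := by
    rw [← integral_map hσ.aemeasurable hVm.aestronglyMeasurable, hσ.map_eq]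
  have hdiff : Integrable (fun y => V (shift y) - V y) ν := hVσint.sub hVint
  refine ⟨hν, (hdiff.add (integrable_const (mf f))).congr hcob.symm, ?_⟩
  calc ∫ y, f y ∂ν = ∫ y, (V (shift y) - V y + mf f) ∂ν := integral_congr_ae hcob
    _ = ∫ y, V (shift y) ∂ν - ∫ y, V y ∂ν + mf f := by
      rw [integral_add hdiff (integrable_const _), integral_sub hVσint hVint,
        integral_const, probReal_univ, one_smul]
    _ = mf f := by rw [hVσ, sub_self, zero_add]

lemma residual_eq_zero_of_mapClusterPt (hf : Continuous f) (hV : Continuous V)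
    {x q : MarkovShift A} (hx : Tendsto (fun j => residual f V (shift^[j] x)) atTop (𝓝 0))
    (hq : MapClusterPt q atTop (fun n => shift^[n] x)) : residual f V q = 0 := by
  obtain ⟨𝒰, h𝒰, hlim⟩ := mapClusterPt_iff_ultrafilter.1 hq
  exact tendsto_nhds_unique (((continuous_residual hf hV).tendsto q).comp hlim) (hx.mono_left h𝒰)

theorem orbit_accumulates_on_support_general (hf : Continuous f) (hcoer : IsCoercive f)
    (hV : Continuous V) (hVb : BoundedFun V) {x : MarkovShift A}
    (hx : Tendsto (fun j => residual f V (shift^[j] x)) atTop (𝓝 0)) {q : MarkovShift A}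
    (hq : ∀ ν, IsMaximizing f ν → q ∈ msupport ν) :
    MapClusterPt q atTop (fun n => shift^[n] x) := by
  obtain ⟨K, hK, hxK⟩ := hcoer.exists_isCompact_orbit_subset hVb hx.bddAbove_range
  obtain ⟨ν, hν⟩ := exists_mapClusterPt_empiricalMeasure hK hxK
  have hsupp {y : MarkovShift A} (hy : y ∈ (ν : Measure (MarkovShift A)).support) :
      MapClusterPt y atTop (fun n => shift^[n] x) := mapClusterPt_orbit_of_mem_support hν hy
  have hR : residual f V =ᵐ[(ν : Measure (MarkovShift A))] 0 := by
    filter_upwards [Measure.support_mem_ae] with y hy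
    exact residual_eq_zero_of_mapClusterPt hf hV hx (hsupp hy)
  have hinv : IsInvariantProb (ν : Measure (MarkovShift A)) :=
    ⟨inferInstance, (measurePreserving_of_mapClusterPt_empiricalMeasure continuous_shift hν).map_eq⟩
  have hmax := isMaximizing_of_residual_ae_eq_zero hV.measurable hVb hinv hR
  exact hsupp (msupport_eq_support (ν : Measure (MarkovShift A)) ▸ hq ν hmax)

end Subaction

/-- If `R₊^∞(x) = Σ_j R₊(σʲ x) < ∞`, then every point of the support of the unique
maximizing measure is an accumulation point of the orbit `(σⁿ x)`. -/
theorem orbit_accumulates_on_support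
    (A : ℕ → ℕ → Bool)
    (hmix : TopologicallyMixing A)
    (hbip : FinitelyPrimitive A)
    (f : MarkovShift A → ℝ)
    (hWalters : SatisfiesWalters f)
    (hVar1 : Var1Finite f)
    (p : ℝ)
    (hPfin : HasGurevichPressure f p)
    (μmax : Measure (MarkovShift A))
    (hmax : IsMaximizing f μmax)
    (huniq : ∀ ν', IsMaximizing f ν' → ν' = μmax)
    (V : MarkovShift A → ℝ)
    (hV : IsCalibratedSubaction f V) :
    ∀ x : MarkovShift A,
      (∑' j : ℕ, ENNReal.ofReal
          (-(f (shift^[j] x) + V (shift^[j] x) - V (shift (shift^[j] x)) - mf f))) ≠ ⊤ →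
        ∀ q ∈ msupport μmax, MapClusterPt q atTop (fun n : ℕ => shift^[n] x) :=
  fun _ hx _ hq => orbit_accumulates_on_support_general hWalters.continuous
    (hbip.isCoercive hVar1 fun a ha => (hPfin a ha).1) hV.1 hV.2.1
    (tendsto_residual_zero (fun y => neg_nonneg.2 (hV.2.2.1 y)) hx)
    fun ν hν => huniq ν hν ▸ hq

end MarkovShift
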